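/- arXiv:2502.19262 — 4 statements merged into one kernel-verified Lean document; each statement's English description precedes it below -/
import Mathlib

section
/- Let (λᵢ)_{i∈ℕ} be a sequence of strictly positive real numbers, (yᵢ)_{i∈ℕ} a sequence of real numbers, s a real number, and α, β natural numbers. Set C := ∫₀^∞ (d^α/dt^α (t^β · e^{-t}))² dt and, for each i, Iᵢ := ∫₀^∞ (d^α/dt^α (t^β · e^{-λᵢ t}))² dt. Then the series ∑ᵢ Iᵢ · yᵢ² · λᵢ^{s + 2(β-α) + 1} is summable if and only if the series ∑ᵢ yᵢ² · λᵢ^{s} is summable, and in that case ∑ᵢ Iᵢ · yᵢ² · λᵢ^{s + 2(β-α) + 1} = C · ∑ᵢ yᵢ² · λᵢ^{s}. -/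
open MeasureTheory

/-!
The substitution `u = λ t` gives the scaling law `Iᵢ = λᵢ^(2(α-β)-1) C`, since
`t^β e^{-λ t} = λ^{-β} f(λ t)` with `f(t) = t^β e^{-t}`. Hence the `i`-th term of the first series
is exactly `C` times the `i`-th term of the second one, and everything follows once `C ≠ 0`.

For `C ≠ 0` (`integral_sq_iteratedDeriv_pos`): each derivative of `f` has the form `p(t) e^{-t}`
with `p` a nonzero polynomial, because `p ↦ p' - p` is injective on polynomials. Its square is
integrable on `(0, ∞)` and vanishes there only at the finitely many roots of `p`. Integrability
matters, as the Bochner integral of a non-integrable function would be `0`.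
-/

/-- Differentiation acts on `p(t) e^{-t}` by `p ↦ p' - p`, which never sends a nonzero polynomial
to zero since `p'` has smaller degree than `p`. -/
lemma exists_iteratedDeriv_eq_polynomial_mul_exp (α β : ℕ) :
    ∃ p : Polynomial ℝ, p ≠ 0 ∧
      iteratedDeriv α (fun t : ℝ => t ^ β * Real.exp (-t))
        = fun t => p.eval t * Real.exp (-t) := by
  induction α with
  | zero => exact ⟨Polynomial.X ^ β, pow_ne_zero _ Polynomial.X_ne_zero, by simp⟩
  | succ n ih =>
    obtain ⟨p, hp, h⟩ := ih
    refine ⟨p.derivative - p, ?_, ?_⟩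
    · intro h0
      have hlt := Polynomial.degree_derivative_lt hp
      rw [sub_eq_zero.mp h0] at hlt
      exact lt_irrefl _ hlt
    · rw [iteratedDeriv_succ, h]
      funext t
      have hd := (p.hasDerivAt t).mul ((hasDerivAt_neg t).exp)
      refine hd.deriv.trans ?_
      rw [Polynomial.eval_sub]
      ring

lemma integrableOn_polynomial_mul_exp (q : Polynomial ℝ) :
    IntegrableOn (fun t : ℝ => q.eval t * Real.exp (-(2 * t))) (Set.Ioi 0) := by
  induction q using Polynomial.induction_on' with
  | add p q hp hq =>
    simp only [Polynomial.eval_add, add_mul]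
    exact hp.add hq
  | monomial n a =>
    have h := integrableOn_rpow_mul_exp_neg_mul_rpow (p := 1) (s := n) (b := 2)
      (by have : (0 : ℝ) ≤ n := n.cast_nonneg
          linarith) one_pos two_pos
    simpa [IntegrableOn, mul_assoc] using h.const_mul a

lemma integral_sq_iteratedDeriv_pos (α β : ℕ) :
    0 < ∫ t in Set.Ioi (0 : ℝ),
      (iteratedDeriv α (fun t : ℝ => t ^ β * Real.exp (-t)) t) ^ 2 := by
  obtain ⟨p, hp, h⟩ := exists_iteratedDeriv_eq_polynomial_mul_exp α β
  rw [h]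
  have hint : IntegrableOn (fun t : ℝ => (p.eval t * Real.exp (-t)) ^ 2) (Set.Ioi 0) := by
    refine (integrableOn_polynomial_mul_exp (p ^ 2)).congr_fun (fun t _ => ?_) measurableSet_Ioi
    simp only [Polynomial.eval_pow, mul_pow, ← Real.exp_nat_mul]
    congr 2
    push_cast
    ring
  rw [setIntegral_pos_iff_support_of_nonneg_ae
    (Filter.Eventually.of_forall fun t => sq_nonneg _) hint]
  have hsub : Set.Ioi (0 : ℝ) \ {t | p.IsRoot t} ⊆
      Function.support (fun t : ℝ => (p.eval t * Real.exp (-t)) ^ 2) ∩ Set.Ioi 0 := by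
    rintro t ⟨ht, hr⟩
    exact ⟨pow_ne_zero _ (mul_ne_zero hr (Real.exp_ne_zero _)), ht⟩
  refine lt_of_lt_of_le ?_ (measure_mono hsub)
  rw [measure_sdiff_null ((Polynomial.finite_setOfPred_isRoot hp).measure_zero volume)]
  simp

lemma integral_sq_iteratedDeriv_scale (α β : ℕ) {c : ℝ} (hc : 0 < c) :
    ∫ t in Set.Ioi (0 : ℝ),
        (iteratedDeriv α (fun t : ℝ => t ^ β * Real.exp (-(c * t))) t) ^ 2
      = c ^ (2 * ((α : ℝ) - β) - 1) * ∫ t in Set.Ioi (0 : ℝ),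
        (iteratedDeriv α (fun t : ℝ => t ^ β * Real.exp (-t)) t) ^ 2 := by
  set f : ℝ → ℝ := fun t => t ^ β * Real.exp (-t) with hf
  have hfs : ContDiff ℝ α f := by fun_prop
  have hscale : (fun t : ℝ => t ^ β * Real.exp (-(c * t)))
      = fun t => (c ^ β)⁻¹ * f (c * t) := by
    funext t
    simp only [hf, mul_pow]
    field_simp
  have hderiv (t : ℝ) : (iteratedDeriv α (fun t : ℝ => t ^ β * Real.exp (-(c * t))) t) ^ 2
      = ((c ^ β)⁻¹ * c ^ α) ^ 2 * (fun u => (iteratedDeriv α f u) ^ 2) (c * t) := by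
    rw [hscale, iteratedDeriv_const_mul_field, iteratedDeriv_comp_const_mul hfs]
    ring
  simp only [hderiv]
  rw [integral_const_mul, integral_comp_mul_left_Ioi (fun u => (iteratedDeriv α f u) ^ 2) 0 hc,
    mul_zero, smul_eq_mul, ← mul_assoc]
  congr 1
  rw [Real.rpow_sub hc, Real.rpow_one, mul_comm 2, Real.rpow_mul hc.le, Real.rpow_sub hc,
    Real.rpow_natCast, Real.rpow_natCast, Real.rpow_ofNat]
  field_simp

/-- Spectral-coefficient form of Lemma 3.1 of the paper: with
`C = ∫₀^∞ (d^α/dt^α (t^β e^{-t}))² dt` and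
`Iᵢ = ∫₀^∞ (d^α/dt^α (t^β e^{-λᵢ t}))² dt`, the series `∑ᵢ Iᵢ yᵢ² λᵢ^{s+2(β-α)+1}` is
summable iff `∑ᵢ yᵢ² λᵢ^s` is, and in that case the sums satisfy
`∑ᵢ Iᵢ yᵢ² λᵢ^{s+2(β-α)+1} = C ∑ᵢ yᵢ² λᵢ^s`. -/
theorem stmt_2 (lam : ℕ → ℝ) (hlam : ∀ i, 0 < lam i) (y : ℕ → ℝ) (s : ℝ) (α β : ℕ) :
    (Summable (fun i : ℕ =>
        (∫ t in Set.Ioi (0:ℝ),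
            (iteratedDeriv α (fun t : ℝ => t ^ β * Real.exp (-(lam i * t))) t) ^ 2)
          * (y i) ^ 2 * lam i ^ (s + 2 * ((β : ℝ) - (α : ℝ)) + 1)) ↔
      Summable (fun i : ℕ => (y i) ^ 2 * lam i ^ s)) ∧
    (Summable (fun i : ℕ => (y i) ^ 2 * lam i ^ s) →
      (∑' i : ℕ,
          (∫ t in Set.Ioi (0:ℝ),
              (iteratedDeriv α (fun t : ℝ => t ^ β * Real.exp (-(lam i * t))) t) ^ 2)
            * (y i) ^ 2 * lam i ^ (s + 2 * ((β : ℝ) - (α : ℝ)) + 1))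
        = (∫ t in Set.Ioi (0:ℝ),
              (iteratedDeriv α (fun t : ℝ => t ^ β * Real.exp (-t)) t) ^ 2)
            * ∑' i : ℕ, (y i) ^ 2 * lam i ^ s) := by
  have hterm : (fun i : ℕ =>
        (∫ t in Set.Ioi (0:ℝ),
            (iteratedDeriv α (fun t : ℝ => t ^ β * Real.exp (-(lam i * t))) t) ^ 2)
          * (y i) ^ 2 * lam i ^ (s + 2 * ((β : ℝ) - (α : ℝ)) + 1))
      = fun i => (∫ t in Set.Ioi (0:ℝ),
              (iteratedDeriv α (fun t : ℝ => t ^ β * Real.exp (-t)) t) ^ 2)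
            * ((y i) ^ 2 * lam i ^ s) := by
    funext i
    rw [integral_sq_iteratedDeriv_scale α β (hlam i)]
    have hpow : lam i ^ s = lam i ^ (2 * ((α : ℝ) - β) - 1)
        * lam i ^ (s + 2 * ((β : ℝ) - (α : ℝ)) + 1) := by
      rw [← Real.rpow_add (hlam i)]
      congr 1
      ring
    rw [hpow]
    ring
  rw [hterm]
  exact ⟨summable_mul_left_iff (integral_sq_iteratedDeriv_pos α β).ne', fun _ => tsum_mul_left⟩
end

section
/- Fix real numbers a and λ and a real τ > 0. Define the operator G on continuous functions f : [0, ∞) → ℝ by (G f)(t) = a · ∫₀^{max(t-τ, 0)} e^{-λ(t-τ-s)} f(s) ds. Then G f is again continuous on [0, ∞), and for every natural number j ≥ 1, every continuous f : [0, ∞) → ℝ and every t ≥ 0, the j-th iterate satisfies (G^j f)(t) = a^j · ∫₀^{max(t-jτ, 0)} ((t - jτ - s)^{j-1} / (j-1)!) · e^{-λ(t-jτ-s)} · f(s) ds. -/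
/-!
Multiplying by `e^{λt}` removes the exponential kernel: with `F(s) = e^{λs} f(s)` and
`P(x) = ∫₀ˣ F`, one has `(G f)(t) = a e^{-λ(t-τ)} P(max(t-τ,0))` (`delayOp_eq`), which gives
continuity at once. The iterate formula follows by induction on `j` from `G^{j+1} f = G^j (G f)`:
in the formula for `G^j` applied to `G f` the exponentials combine to a constant, the integrand
vanishes on `[0,τ]`, and after a shift by `τ` one integration by parts (`cauchy_step`) turns
`(x-s)^n/n!` against `P` into `(x-s)^{n+1}/(n+1)!` against `F`.

Since only values on `[0,∞)` matter, `f` is replaced by the globally continuous extension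
`s ↦ f(max(s,0))`.
-/

open MeasureTheory intervalIntegral

/-- The single-mode delayed Volterra operator
`(G f)(t) = a ∫₀^{max(t-τ,0)} e^{-λ(t-τ-s)} f(s) ds`. -/
noncomputable def delayOp (a lam τ : ℝ) (f : ℝ → ℝ) : ℝ → ℝ :=
  fun t => a * ∫ s in (0:ℝ)..(max (t - τ) 0), Real.exp (-(lam * (t - τ - s))) * f s

/-- The step of Cauchy's formula for repeated integration. -/
lemma cauchy_step (F : ℝ → ℝ) (hF : Continuous F) (n : ℕ) (x : ℝ) :
    ∫ u in (0:ℝ)..x, (x - u) ^ n / (Nat.factorial n) * ∫ s in (0:ℝ)..u, F s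
      = ∫ s in (0:ℝ)..x, (x - s) ^ (n + 1) / (Nat.factorial (n + 1)) * F s := by
  have hP : ∀ u ∈ Set.uIcc 0 x, HasDerivAt (fun u => ∫ s in (0:ℝ)..u, F s) (F u) u :=
    fun u _ => hF.integral_hasStrictDerivAt 0 u |>.hasDerivAt
  have hQ : ∀ u ∈ Set.uIcc 0 x,
      HasDerivAt (fun u : ℝ => (x - u) ^ (n + 1) / (Nat.factorial (n + 1) : ℝ))
        (-((x - u) ^ n / (Nat.factorial n))) u := by
    intro u _
    have h := (((hasDerivAt_id u).const_sub x).pow (n + 1)).div_const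
      (Nat.factorial (n + 1) : ℝ)
    refine h.congr_deriv ?_
    have h1 : (Nat.factorial n : ℝ) ≠ 0 := by positivity
    have h2 : (n : ℝ) + 1 ≠ 0 := by positivity
    simp only [Nat.factorial_succ, id]
    push_cast
    field_simp
  have h := intervalIntegral.integral_mul_deriv_eq_deriv_mul hQ hP
    (Continuous.intervalIntegrable (by fun_prop) _ _) (hF.intervalIntegrable _ _)
  rw [h]
  simp

/-- `G f` with the exponential kernel factored out, in terms of the globally continuous
extension of `f` from `[0,∞)`. -/
lemma delayOp_eq (a lam τ : ℝ) (f : ℝ → ℝ) (t : ℝ) :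
    delayOp a lam τ f t = a * (Real.exp (-(lam * (t - τ))) *
      ∫ s in (0:ℝ)..(max (t - τ) 0), Real.exp (lam * s) * f (max s 0)) := by
  unfold delayOp
  congr 1
  rw [← intervalIntegral.integral_const_mul]
  apply intervalIntegral.integral_congr
  intro s hs
  rw [Set.uIcc_of_le (le_max_right _ _)] at hs
  simp only [max_eq_left hs.1, ← mul_assoc, ← Real.exp_add]
  ring_nf

lemma continuous_weight (lam : ℝ) (f : ℝ → ℝ) (hf : ContinuousOn f (Set.Ici 0)) :
    Continuous (fun s => Real.exp (lam * s) * f (max s 0)) := by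
  have : Continuous (fun s : ℝ => f (max s 0)) :=
    hf.comp_continuous (by fun_prop) (fun s => Set.mem_Ici.2 (le_max_right _ _))
  exact (by fun_prop : Continuous fun s : ℝ => Real.exp (lam * s)).mul this

lemma continuous_delayOp (a lam τ : ℝ) (f : ℝ → ℝ) (hf : ContinuousOn f (Set.Ici 0)) :
    Continuous (delayOp a lam τ f) := by
  have hP : Continuous (fun x : ℝ => ∫ s in (0:ℝ)..x, Real.exp (lam * s) * f (max s 0)) :=
    intervalIntegral.continuous_primitive
      (fun _ _ => (continuous_weight lam f hf).intervalIntegrable _ _) 0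
  have h2 := hP.comp (by fun_prop : Continuous (fun t : ℝ => max (t - τ) 0))
  rw [funext (delayOp_eq a lam τ f)]
  exact continuous_const.mul ((by fun_prop : Continuous _).mul h2)

/-- `cauchy_step` with a delay `τ` inside: the primitive, extended by zero to the left of the
delay, contributes nothing on `[0,τ]`. -/
lemma delayed_step (F : ℝ → ℝ) (hF : Continuous F) (n : ℕ) (τ : ℝ) (hτ : 0 < τ) (y : ℝ) :
    ∫ u in (0:ℝ)..(max y 0), (y - u) ^ n / (Nat.factorial n) *
        ∫ s in (0:ℝ)..(max (u - τ) 0), F s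
      = ∫ s in (0:ℝ)..(max (y - τ) 0),
          (y - τ - s) ^ (n + 1) / (Nat.factorial (n + 1)) * F s := by
  have hP : Continuous (fun x : ℝ => ∫ s in (0:ℝ)..x, F s) :=
    intervalIntegral.continuous_primitive (fun _ _ => hF.intervalIntegrable _ _) 0
  have h2 : Continuous (fun u : ℝ => ∫ s in (0:ℝ)..(max (u - τ) 0), F s) :=
    hP.comp (by fun_prop : Continuous (fun t : ℝ => max (t - τ) 0))
  have hzero : ∀ z, 0 ≤ z → z ≤ τ → ∫ u in (0:ℝ)..z, (y - u) ^ n / (Nat.factorial n) *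
        ∫ s in (0:ℝ)..(max (u - τ) 0), F s = 0 := by
    intro z hz hzτ
    rw [intervalIntegral.integral_congr (g := fun _ => (0:ℝ))]
    · simp
    · intro u hu
      rw [Set.uIcc_of_le hz] at hu
      simp [max_eq_right (show u - τ ≤ 0 by linarith [hu.2])]
  rcases le_total y τ with h | h
  · rw [hzero _ (le_max_right _ _) (max_le h hτ.le), max_eq_right (by linarith)]
    simp
  · rw [max_eq_left (by linarith), max_eq_left (by linarith), ← cauchy_step F hF,
      ← intervalIntegral.integral_add_adjacent_intervals (b := τ)
        (Continuous.intervalIntegrable (by fun_prop) _ _)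
        (Continuous.intervalIntegrable (by fun_prop) _ _), hzero τ hτ.le le_rfl, zero_add]
    have hs := intervalIntegral.integral_comp_sub_right (a := τ) (b := y)
      (fun v => (y - τ - v) ^ n / (Nat.factorial n : ℝ) * ∫ s in (0:ℝ)..v, F s) τ
    rw [sub_self] at hs
    rw [← hs]
    apply intervalIntegral.integral_congr
    intro u hu
    rw [Set.uIcc_of_le h] at hu
    simp only [max_eq_left (show 0 ≤ u - τ by linarith [hu.1])]
    ring_nf

/-- `G` preserves continuity on `[0,∞)`, and its `j`-th iterate (`j ≥ 1`) is given by
`(G^j f)(t) = a^j ∫₀^{max(t-jτ,0)} ((t-jτ-s)^{j-1}/(j-1)!) e^{-λ(t-jτ-s)} f(s) ds`. -/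
theorem stmt_7 (a lam τ : ℝ) (hτ : 0 < τ) :
    (∀ f : ℝ → ℝ, ContinuousOn f (Set.Ici 0) →
        ContinuousOn (delayOp a lam τ f) (Set.Ici 0)) ∧
    (∀ j : ℕ, 1 ≤ j → ∀ f : ℝ → ℝ, ContinuousOn f (Set.Ici 0) → ∀ t : ℝ, 0 ≤ t →
      ((delayOp a lam τ)^[j] f) t
        = a ^ j * ∫ s in (0:ℝ)..(max (t - j * τ) 0),
            ((t - j * τ - s) ^ (j - 1) / (Nat.factorial (j - 1)))
              * Real.exp (-(lam * (t - j * τ - s))) * f s) := by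
  refine ⟨fun f hf => (continuous_delayOp a lam τ f hf).continuousOn, ?_⟩
  intro j hj
  induction j, hj using Nat.le_induction with
  | base =>
    intro f _ t _
    simp [delayOp]
  | succ j hj ih =>
    intro f hf t ht
    obtain ⟨n, rfl⟩ : ∃ n, j = n + 1 := ⟨j - 1, by omega⟩
    rw [Function.iterate_succ_apply, ih _ (continuous_delayOp a lam τ f hf).continuousOn t ht]
    simp only [Nat.add_sub_cancel]
    have hy : t - ((n + 1 + 1 : ℕ) : ℝ) * τ = t - ((n + 1 : ℕ) : ℝ) * τ - τ := by
      push_cast; ring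
    rw [hy]
    generalize t - ((n + 1 : ℕ) : ℝ) * τ = y
    have key := delayed_step _ (continuous_weight lam f hf) n τ hτ y
    have hL : ∫ s in (0:ℝ)..(max y 0), (y - s) ^ n / (Nat.factorial n : ℝ)
          * Real.exp (-(lam * (y - s))) * delayOp a lam τ f s
        = a * Real.exp (-(lam * (y - τ))) * ∫ u in (0:ℝ)..(max y 0),
          (y - u) ^ n / (Nat.factorial n) *
          ∫ s in (0:ℝ)..(max (u - τ) 0), Real.exp (lam * s) * f (max s 0) := by
      rw [← intervalIntegral.integral_const_mul]
      congr 1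
      funext s
      rw [delayOp_eq, show -(lam * (y - τ)) = -(lam * (y - s)) + -(lam * (s - τ)) by ring,
        Real.exp_add]
      ring
    have hR : ∫ s in (0:ℝ)..(max (y - τ) 0),
          (y - τ - s) ^ (n + 1) / (Nat.factorial (n + 1) : ℝ)
          * Real.exp (-(lam * (y - τ - s))) * f s
        = Real.exp (-(lam * (y - τ))) * ∫ s in (0:ℝ)..(max (y - τ) 0),
          (y - τ - s) ^ (n + 1) / (Nat.factorial (n + 1)) *
          (Real.exp (lam * s) * f (max s 0)) := by
      rw [← intervalIntegral.integral_const_mul]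
      apply intervalIntegral.integral_congr
      intro s hs
      rw [Set.uIcc_of_le (le_max_right _ _)] at hs
      simp only [max_eq_left hs.1]
      rw [show -(lam * (y - τ - s)) = -(lam * (y - τ)) + lam * s by ring, Real.exp_add]
      ring
    rw [hL, hR, key]
    ring
end

section
/- The function Φ is continuous on [0, ∞), satisfies Φ(0) = 1, and satisfies the renewal integral equation Φ(t) = e^{-λ t} + a · ∫₀^{max(t-τ, 0)} e^{-λ(t-τ-σ)} Φ(σ) dσ for every t ≥ 0. Moreover, for each fixed t ≥ 0, all terms of the series defining Φ(t) with index j > t/τ vanish, so the series is a finite sum. -/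
/-!
Write `T j t = (a^j / j!) (t - jτ)₊^j e^{-λ (t - jτ)₊}`, so that for `0 ≤ t ≤ Nτ` the flow is the
finite sum `∑_{j ≤ N} T j t` (`delayFlow_eq_sum`): the zeroth term is `e^{-λt}` and every term with
`jτ ≥ t`, `j ≥ 1` vanishes. Continuity is then local agreement with a finite sum of continuous
functions. The renewal equation holds term by term: integrating the `k`-th term against the kernel
produces the next one, `a ∫₀^s e^{-λ(s-σ)} T k σ dσ = T (k+1) (s+τ)` (`mul_integral_delayTerm`),
because the exponentials combine to the constant `e^{-λ(s-kτ)}` on the support of the term and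
`(σ - kτ)₊^(k+1) / (k+1)` is a primitive of `(σ - kτ)₊^k`.
-/

open MeasureTheory intervalIntegral

/-- Single-spectral-mode flow of the delayed heat equation:
`Φ(t) = e^{-λt} + ∑_{j≥1} (a^j/j!) (max(t-jτ,0))^j e^{-λ max(t-jτ,0)}` for `t ≥ 0`,
and `Φ(t) = 0` for `t < 0`. -/
noncomputable def delayFlow (a lam τ : ℝ) (t : ℝ) : ℝ :=
  if t < 0 then 0
  else Real.exp (-(lam * t)) +
    ∑' k : ℕ,
      (a ^ (k + 1) / (Nat.factorial (k + 1))) * (max (t - (k + 1) * τ) 0) ^ (k + 1)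
        * Real.exp (-(lam * max (t - (k + 1) * τ) 0))

/-- The `j`-th term of the series; for `j = 0` and `t ≥ 0` it is the leading `e^{-λt}`. -/
noncomputable def delayTerm (a lam τ : ℝ) (j : ℕ) (t : ℝ) : ℝ :=
  (a ^ j / (Nat.factorial j)) * (max (t - j * τ) 0) ^ j * Real.exp (-(lam * max (t - j * τ) 0))

theorem continuous_delayTerm (a lam τ : ℝ) (j : ℕ) : Continuous (delayTerm a lam τ j) := by
  unfold delayTerm
  fun_prop

theorem delayTerm_zero (a lam τ : ℝ) {t : ℝ} (ht : 0 ≤ t) :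
    delayTerm a lam τ 0 t = Real.exp (-(lam * t)) := by
  simp [delayTerm, ht]

theorem delayTerm_eq_zero (a lam τ : ℝ) {j : ℕ} (hj : j ≠ 0) {t : ℝ} (ht : t ≤ j * τ) :
    delayTerm a lam τ j t = 0 := by
  have h : max (t - j * τ) 0 = 0 := max_eq_right (by linarith)
  simp [delayTerm, h, hj]

theorem delayFlow_eq_sum (a lam : ℝ) {τ : ℝ} (hτ : 0 < τ) {t : ℝ} (ht : 0 ≤ t) {N : ℕ}
    (hN : t ≤ N * τ) :
    delayFlow a lam τ t = ∑ j ∈ Finset.range (N + 1), delayTerm a lam τ j t := by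
  have hts : ∑' k : ℕ, delayTerm a lam τ (k + 1) t
      = ∑ k ∈ Finset.range N, delayTerm a lam τ (k + 1) t := by
    refine tsum_eq_sum fun k hk => delayTerm_eq_zero _ _ _ k.succ_ne_zero (hN.trans ?_)
    have hNk : N ≤ k + 1 := by
      have := Finset.mem_range.not.mp hk
      omega
    gcongr
  rw [Finset.sum_range_succ', ← hts, delayTerm_zero a lam τ ht, add_comm]
  simp only [delayFlow, not_lt.mpr ht, if_false, delayTerm, Nat.cast_add, Nat.cast_one]

theorem exists_lt_nat_mul {τ : ℝ} (hτ : 0 < τ) (t : ℝ) : ∃ N : ℕ, t < N * τ := by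
  obtain ⟨N, hN⟩ := exists_nat_gt (t / τ)
  exact ⟨N, (div_lt_iff₀ hτ).mp hN⟩

/-- For `k = 0` the primitive `(x - c)₊` has derivative `0 ≠ (x - c)₊ ^ 0` left of `c`, hence the
assumption `hc`. -/
theorem integral_posPart_pow (k : ℕ) (c : ℝ) {s : ℝ} (hs : 0 ≤ s) (hc : k = 0 → c ≤ 0)
    (h0 : 0 ≤ c) :
    ∫ x in (0:ℝ)..s, (max (x - c) 0) ^ k = (max (s - c) 0) ^ (k + 1) / (k + 1) := by
  have key := integral_eq_sub_of_hasDeriv_right_of_le (a := 0) (b := s)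
    (f := fun x => (max (x - c) 0) ^ (k + 1) / ((k : ℝ) + 1))
    (f' := fun x => (max (x - c) 0) ^ k) hs (by fun_prop) ?_
    (Continuous.intervalIntegrable (by fun_prop) _ _)
  · rw [key, max_eq_right (by linarith : (0:ℝ) - c ≤ 0)]
    simp
  · intro x hx
    rcases lt_or_ge x c with h | h
    · have hk : k ≠ 0 := fun hk => by linarith [hc hk, hx.1]
      have hev : (fun x => (max (x - c) 0) ^ (k + 1) / ((k : ℝ) + 1)) =ᶠ[nhds x] fun _ => 0 := by
        filter_upwards [eventually_lt_nhds h] with y hy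
        simp [max_eq_right (by linarith : y - c ≤ 0)]
      rw [max_eq_right (by linarith : x - c ≤ 0), zero_pow hk]
      exact ((hasDerivAt_const x (0:ℝ)).congr_of_eventuallyEq hev).hasDerivWithinAt
    · have hd : HasDerivAt (fun y : ℝ => (y - c) ^ (k + 1) / ((k : ℝ) + 1)) ((x - c) ^ k) x := by
        have h1 := (((hasDerivAt_id x).sub_const c).pow (k + 1)).div_const ((k : ℝ) + 1)
        have hk : (k : ℝ) + 1 ≠ 0 := by positivity
        refine h1.congr_deriv ?_
        simp
        field_simp
      rw [max_eq_left (by linarith : 0 ≤ x - c)]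
      refine hd.hasDerivWithinAt.congr (fun y hy => ?_) ?_
      · have hy' : x < y := hy
        rw [max_eq_left (by linarith : 0 ≤ y - c)]
      · rw [max_eq_left (by linarith : 0 ≤ x - c)]

theorem mul_integral_delayTerm (a lam : ℝ) {τ : ℝ} (hτ : 0 < τ) (k : ℕ) {s : ℝ} (hs : 0 ≤ s) :
    a * ∫ σ in (0:ℝ)..s, Real.exp (-(lam * (s - σ))) * delayTerm a lam τ k σ
      = delayTerm a lam τ (k + 1) (s + τ) := by
  have hcongr : ∫ σ in (0:ℝ)..s, Real.exp (-(lam * (s - σ))) * delayTerm a lam τ k σ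
      = ∫ σ in (0:ℝ)..s, (a ^ k / (Nat.factorial k) * Real.exp (-(lam * (s - k * τ))))
          * (max (σ - k * τ) 0) ^ k := by
    refine integral_congr fun σ hσ => ?_
    rw [Set.uIcc_of_le hs] at hσ
    rcases le_or_gt (k * τ) σ with h | h
    · have he : Real.exp (-(lam * (s - k * τ)))
          = Real.exp (-(lam * (s - σ))) * Real.exp (-(lam * (σ - k * τ))) := by
        rw [← Real.exp_add]
        ring_nf
      simp only [delayTerm, max_eq_left (by linarith : 0 ≤ σ - k * τ), he]
      ring
    · have hk : k ≠ 0 := by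
        rintro rfl
        simp at h
        linarith [hσ.1]
      simp [delayTerm_eq_zero a lam τ hk h.le, max_eq_right (by linarith : σ - k * τ ≤ 0), hk]
  rw [hcongr, intervalIntegral.integral_const_mul,
    integral_posPart_pow k (k * τ) hs (by rintro rfl; simp) (by positivity)]
  have hst : s + τ - ((k + 1 : ℕ) : ℝ) * τ = s - k * τ := by
    push_cast
    ring
  simp only [delayTerm, hst]
  rcases le_or_gt (k * τ) s with h | h
  · rw [max_eq_left (by linarith : 0 ≤ s - k * τ), Nat.factorial_succ]
    have hk : (k : ℝ) + 1 ≠ 0 := by positivity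
    have hf : (Nat.factorial k : ℝ) ≠ 0 := by positivity
    push_cast
    field_simp
    ring
  · simp [max_eq_right (by linarith : s - k * τ ≤ 0)]

theorem continuousOn_delayFlow (a lam : ℝ) {τ : ℝ} (hτ : 0 < τ) :
    ContinuousOn (delayFlow a lam τ) (Set.Ici 0) := by
  intro t ht
  obtain ⟨N, hN⟩ := exists_lt_nat_mul hτ t
  have hc : Continuous fun x => ∑ j ∈ Finset.range (N + 1), delayTerm a lam τ j x :=
    continuous_finsetSum _ fun j _ => continuous_delayTerm a lam τ j
  refine hc.continuousWithinAt.congr_of_eventuallyEq ?_ (delayFlow_eq_sum a lam hτ ht hN.le)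
  filter_upwards [self_mem_nhdsWithin, mem_nhdsWithin_of_mem_nhds (eventually_lt_nhds hN)]
    with x hx hxN
  exact delayFlow_eq_sum a lam hτ hx (le_of_lt hxN)

theorem delayFlow_renewal (a lam : ℝ) {τ : ℝ} (hτ : 0 < τ) {t : ℝ} (ht : 0 ≤ t) :
    delayFlow a lam τ t = Real.exp (-(lam * t)) +
      a * ∫ σ in (0:ℝ)..(max (t - τ) 0),
        Real.exp (-(lam * (t - τ - σ))) * delayFlow a lam τ σ := by
  rcases le_total t τ with h | h
  · have h1 : delayTerm a lam τ 1 t = 0 := delayTerm_eq_zero a lam τ one_ne_zero (by simpa using h)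
    rw [max_eq_right (by linarith), delayFlow_eq_sum a lam hτ ht (N := 1) (by simpa using h)]
    simp [Finset.sum_range_succ, h1, delayTerm_zero a lam τ ht]
  · have hs : 0 ≤ t - τ := by linarith
    rw [max_eq_left hs]
    obtain ⟨N, hN⟩ := exists_lt_nat_mul hτ (t - τ)
    have hint : ∫ σ in (0:ℝ)..(t - τ), Real.exp (-(lam * (t - τ - σ))) * delayFlow a lam τ σ
        = ∑ k ∈ Finset.range (N + 1),
          ∫ σ in (0:ℝ)..(t - τ), Real.exp (-(lam * (t - τ - σ))) * delayTerm a lam τ k σ := by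
      rw [← intervalIntegral.integral_finsetSum]
      · refine integral_congr fun σ hσ => ?_
        rw [Set.uIcc_of_le hs] at hσ
        simp only [delayFlow_eq_sum a lam hτ hσ.1 (hσ.2.trans hN.le), Finset.mul_sum]
      · intro k _
        have := continuous_delayTerm a lam τ k
        exact Continuous.intervalIntegrable (by fun_prop) _ _
    have hN' : t ≤ ((N + 1 : ℕ) : ℝ) * τ := by
      push_cast
      linarith
    rw [hint, Finset.mul_sum, delayFlow_eq_sum a lam hτ ht hN', Finset.sum_range_succ',
      delayTerm_zero a lam τ ht, add_comm]
    congr 1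
    refine Finset.sum_congr rfl fun k _ => ?_
    rw [mul_integral_delayTerm a lam hτ k hs, sub_add_cancel]

/-- `Φ` is continuous on `[0,∞)`, `Φ(0) = 1`, `Φ` solves the renewal equation
`Φ(t) = e^{-λt} + a ∫₀^{max(t-τ,0)} e^{-λ(t-τ-σ)} Φ(σ) dσ`, and for each `t ≥ 0`
all terms of its defining series with index `j > t/τ` vanish. -/
theorem stmt_8 (a lam τ : ℝ) (hτ : 0 < τ) :
    ContinuousOn (delayFlow a lam τ) (Set.Ici 0) ∧
    delayFlow a lam τ 0 = 1 ∧
    (∀ t : ℝ, 0 ≤ t →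
      delayFlow a lam τ t
        = Real.exp (-(lam * t)) +
          a * ∫ σ in (0:ℝ)..(max (t - τ) 0),
              Real.exp (-(lam * (t - τ - σ))) * delayFlow a lam τ σ) ∧
    (∀ t : ℝ, 0 ≤ t → ∀ j : ℕ, 1 ≤ j → t / τ < j →
      (a ^ j / (Nat.factorial j)) * (max (t - j * τ) 0) ^ j
          * Real.exp (-(lam * max (t - j * τ) 0)) = 0) := by
  refine ⟨continuousOn_delayFlow a lam hτ, ?_, fun t ht => delayFlow_renewal a lam hτ ht, ?_⟩
  · rw [delayFlow_eq_sum a lam hτ le_rfl (N := 0) (by simp)]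
    simp [delayTerm_zero]
  · intro t _ j hj htj
    exact delayTerm_eq_zero a lam τ (by omega) ((div_lt_iff₀ hτ).mp htj).le
end

section
/- Suppose a ≠ 0. Then Φ is infinitely differentiable on the set (0, ∞) \ {jτ : j ∈ ℕ, j ≥ 1}, and for each integer j ≥ 1: (1) Φ is (j-1)-times continuously differentiable on an open neighborhood of jτ; (2) the one-sided limits lim_{t→(jτ)⁺} Φ^{(j)}(t) and lim_{t→(jτ)⁻} Φ^{(j)}(t) of the j-th derivative both exist, and their difference equals exactly a^j; (3) consequently Φ is not j-times continuously differentiable on any neighborhood of jτ. -/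
/-!
Near any time `t` only finitely many terms of the series are nonzero: on `[nτ, (n+1)τ]` the function
`Φ` equals the entire function `G n = g 0 + ⋯ + g n`, where
`g k t = a^k / k! * (t - kτ)^k * e^{-λ (t - kτ)}` (`delayFlow_eq_modeSum`; `g` is `modeTerm` and `G` is
`modeSum`). This gives smoothness off the
lattice. Around `jτ`, `Φ` is `G (j-1)` plus the term `g j` switched on at `jτ`, that is, a smooth
multiple of `max (t - jτ) 0 ^ j`, which is of class `C^{j-1}` (`contDiff_max_zero_pow`).

The `j`-th derivative of `Φ` agrees with that of `G (j-1)` to the left of `jτ` and with that of `G j` to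
the right, so both one-sided limits exist and differ by the `j`-th derivative of `g j` at `jτ`; this is
`a^j`, since `g j` has a zero of order `j` there with leading coefficient `a^j / j!`
(`iteratedDeriv_modeTerm`). A `C^j` function has a continuous `j`-th derivative, hence no such jump.
-/

open MeasureTheory Filter

/-- The `n`-th term of the series with the cutoff `max · 0` removed; an entire function of `t`. The case
`n = 0` is the leading exponential `e^{-λ t}`. -/
noncomputable def modeTerm (a lam τ : ℝ) (n : ℕ) (t : ℝ) : ℝ :=
  a ^ n / (Nat.factorial n) * (t - n * τ) ^ n * Real.exp (-(lam * (t - n * τ)))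

/-- The sum of the modes `0, …, n`, i.e. those that are switched on by time `nτ`. -/
noncomputable def modeSum (a lam τ : ℝ) (n : ℕ) (t : ℝ) : ℝ :=
  ∑ k ∈ Finset.range (n + 1), modeTerm a lam τ k t

lemma contDiff_modeTerm (a lam τ : ℝ) (n : ℕ) (m : WithTop ℕ∞) :
    ContDiff ℝ m (modeTerm a lam τ n) := by
  unfold modeTerm
  fun_prop

lemma contDiff_modeSum (a lam τ : ℝ) (n : ℕ) (m : WithTop ℕ∞) :
    ContDiff ℝ m (modeSum a lam τ n) := by
  unfold modeSum
  exact ContDiff.sum fun k _ => contDiff_modeTerm a lam τ k m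

lemma modeSum_succ (a lam τ : ℝ) (n : ℕ) :
    modeSum a lam τ (n + 1) = modeSum a lam τ n + modeTerm a lam τ (n + 1) := by
  funext t
  simp [modeSum, Finset.sum_range_succ]

lemma delayFlow_eq_modeSum {a lam τ : ℝ} (hτ : 0 < τ) (n : ℕ) {t : ℝ}
    (h1 : (n : ℝ) * τ ≤ t) (h2 : t ≤ ((n : ℝ) + 1) * τ) :
    delayFlow a lam τ t = modeSum a lam τ n t := by
  have ht : ¬ t < 0 := not_lt.2 ((by positivity : (0 : ℝ) ≤ n * τ).trans h1)
  rw [delayFlow, if_neg ht, modeSum, Finset.sum_range_succ', add_comm,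
    tsum_eq_sum (s := Finset.range n)]
  · congr 1
    · refine Finset.sum_congr rfl fun k hk => ?_
      have hk' : ((k : ℝ) + 1) ≤ n := by exact_mod_cast Finset.mem_range.1 hk
      have : 0 ≤ t - ((k : ℝ) + 1) * τ := by nlinarith
      rw [max_eq_left this, modeTerm]
      push_cast
      rfl
    · simp [modeTerm]
  · intro k hk
    have hk' : (n : ℝ) ≤ k := by exact_mod_cast not_lt.1 (fun h => hk (Finset.mem_range.2 h))
    have : t - ((k : ℝ) + 1) * τ ≤ 0 := by nlinarith
    simp [max_eq_right this]

lemma hasDerivAt_max_zero_pow (m : ℕ) (s : ℝ) :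
    HasDerivAt (fun s : ℝ => max s 0 ^ (m + 2)) ((m + 2 : ℝ) * max s 0 ^ (m + 1)) s := by
  have hneg : ∀ s : ℝ, s ≤ 0 → HasDerivWithinAt (fun s : ℝ => max s 0 ^ (m + 2))
      ((m + 2 : ℝ) * max s 0 ^ (m + 1)) (Set.Iic 0) s := fun s hs => by
    have h := (hasDerivWithinAt_const s (Set.Iic 0) (0 : ℝ)).congr
      (f₁ := fun s : ℝ => max s 0 ^ (m + 2))
      (fun x hx => by simp [max_eq_right (Set.mem_Iic.1 hx)]) (by simp [max_eq_right hs])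
    simpa [max_eq_right hs] using h
  have hpos : ∀ s : ℝ, 0 ≤ s → HasDerivWithinAt (fun s : ℝ => max s 0 ^ (m + 2))
      ((m + 2 : ℝ) * max s 0 ^ (m + 1)) (Set.Ici 0) s := fun s hs => by
    have h := ((hasDerivAt_pow (m + 2) s).hasDerivWithinAt (s := Set.Ici 0)).congr
      (f₁ := fun s : ℝ => max s 0 ^ (m + 2))
      (fun x hx => by simp [max_eq_left (Set.mem_Ici.1 hx)]) (by simp [max_eq_left hs])
    simpa [max_eq_left hs] using h
  rcases lt_trichotomy s 0 with hs | rfl | hs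
  · exact (hneg s hs.le).hasDerivAt (Iic_mem_nhds hs)
  · have h := (hneg 0 le_rfl).union (hpos 0 le_rfl)
    rwa [Set.Iic_union_Ici, hasDerivWithinAt_univ] at h
  · exact (hpos s hs.le).hasDerivAt (Ici_mem_nhds hs)

lemma contDiff_max_zero_pow (m : ℕ) : ContDiff ℝ m (fun s : ℝ => max s 0 ^ (m + 1)) := by
  induction m with
  | zero =>
    rw [Nat.cast_zero, contDiff_zero]
    fun_prop
  | succ m ih =>
    rw [Nat.cast_succ, contDiff_succ_iff_deriv]
    refine ⟨fun s => (hasDerivAt_max_zero_pow m s).differentiableAt, by simp, ?_⟩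
    rw [show deriv (fun s : ℝ => max s 0 ^ (m + 1 + 1)) = fun s => (m + 2 : ℝ) * max s 0 ^ (m + 1)
      from funext fun s => (hasDerivAt_max_zero_pow m s).deriv]
    exact contDiff_const.mul ih

lemma iteratedDeriv_modeTerm (a lam τ : ℝ) (n : ℕ) :
    iteratedDeriv n (modeTerm a lam τ n) (n * τ) = a ^ n := by
  obtain ⟨R, -, hR⟩ := iteratedDeriv_mul_pow_sub_of_analytic (𝕜 := ℝ) (k := n) (t := 0)
    (z₀ := n * τ) (R := modeTerm a lam τ n)
    (R₁ := fun t => a ^ n / (Nat.factorial n) * Real.exp (-(lam * (t - n * τ))))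
    (fun z => by fun_prop) (fun z => by simp only [modeTerm, add_zero]; ring)
  rw [hR]
  have : (Nat.factorial n : ℝ) ≠ 0 := by positivity
  simp
  field_simp

lemma delayFlow_eqOn_Ioo {a lam τ : ℝ} (hτ : 0 < τ) (n : ℕ) :
    Set.EqOn (delayFlow a lam τ) (modeSum a lam τ n) (Set.Ioo (n * τ) ((n + 1) * τ)) :=
  fun _ ht => delayFlow_eq_modeSum hτ n ht.1.le ht.2.le

lemma delayFlow_contDiffOn {a lam τ : ℝ} (hτ : 0 < τ) :
    ContDiffOn ℝ (⊤ : ℕ∞) (delayFlow a lam τ)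
      (Set.Ioi (0:ℝ) \ {x : ℝ | ∃ j : ℕ, 1 ≤ j ∧ x = (j : ℝ) * τ}) := by
  rintro x ⟨hx0, hx⟩
  have hx0 : 0 < x := hx0
  set n := ⌊x / τ⌋₊ with hn
  have h1 : (n : ℝ) * τ ≤ x := (le_div_iff₀ hτ).1 (Nat.floor_le (by positivity))
  have h2 : x < ((n : ℝ) + 1) * τ := (div_lt_iff₀ hτ).1 (Nat.lt_floor_add_one _)
  have h3 : (n : ℝ) * τ ≠ x := by
    intro h
    rcases Nat.eq_zero_or_pos n with h0 | h0
    · rw [h0] at h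
      simp at h
      exact hx0.ne h
    · exact hx ⟨n, h0, h.symm⟩
  have hev : delayFlow a lam τ =ᶠ[nhds x] modeSum a lam τ n :=
    (delayFlow_eqOn_Ioo hτ n).eventuallyEq_of_mem (Ioo_mem_nhds (lt_of_le_of_ne h1 h3) h2)
  exact ((contDiff_modeSum a lam τ n _).contDiffAt.congr_of_eventuallyEq hev).contDiffWithinAt

/-- Around `(m+1)τ` the flow is the smooth function `modeSum m` plus a smooth multiple of
`max (t - (m+1)τ) 0 ^ (m+1)`, hence of class `C^m`. -/
lemma delayFlow_contDiffOn_near {a lam τ : ℝ} (hτ : 0 < τ) (m : ℕ) :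
    ContDiffOn ℝ m (delayFlow a lam τ) (Set.Ioo (m * τ) ((m + 2) * τ)) := by
  have hc : ContDiff ℝ m (fun t => modeSum a lam τ m t +
      a ^ (m + 1) / (Nat.factorial (m + 1)) * max (t - (m + 1 : ℕ) * τ) 0 ^ (m + 1)
        * Real.exp (-(lam * (t - (m + 1 : ℕ) * τ)))) := by
    have h1 := (contDiff_max_zero_pow m).comp
      (contDiff_id.sub contDiff_const : ContDiff ℝ m fun t : ℝ => t - (m + 1 : ℕ) * τ)
    have h2 : ContDiff ℝ m fun t : ℝ => Real.exp (-(lam * (t - (m + 1 : ℕ) * τ))) := by fun_prop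
    exact (contDiff_modeSum a lam τ m _).add ((contDiff_const.mul h1).mul h2)
  refine hc.contDiffOn.congr fun t ht => ?_
  rcases le_total t (((m : ℝ) + 1) * τ) with h | h
  · rw [delayFlow_eq_modeSum hτ m ht.1.le h]
    have : t - ((m + 1 : ℕ) : ℝ) * τ ≤ 0 := by push_cast; linarith
    simp only [max_eq_right this]
    simp
  · rw [delayFlow_eq_modeSum hτ (m + 1) (by push_cast; exact h)
      (by push_cast; linarith [ht.2]), modeSum_succ]
    have : 0 ≤ t - ((m + 1 : ℕ) : ℝ) * τ := by push_cast; linarith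
    simp only [max_eq_left this]
    rfl

lemma tendsto_iteratedDeriv_left {a lam τ : ℝ} (hτ : 0 < τ) (m k : ℕ) :
    Tendsto (iteratedDeriv k (delayFlow a lam τ))
      (nhdsWithin ((m + 1 : ℕ) * τ) (Set.Iio ((m + 1 : ℕ) * τ)))
      (nhds (iteratedDeriv k (modeSum a lam τ m) ((m + 1 : ℕ) * τ))) := by
  have hc := (contDiff_modeSum a lam τ m k).continuous_iteratedDeriv' k
  refine (hc.continuousAt.mono_left nhdsWithin_le_nhds).congr' ?_
  have hmem : Set.Ioo ((m : ℝ) * τ) ((m + 1 : ℕ) * τ) ∈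
      nhdsWithin (((m + 1 : ℕ) : ℝ) * τ) (Set.Iio ((m + 1 : ℕ) * τ)) :=
    Ioo_mem_nhdsLT (by push_cast; linarith)
  push_cast at hmem ⊢
  filter_upwards [hmem] with t ht
  exact ((delayFlow_eqOn_Ioo hτ m).iteratedDeriv_of_isOpen isOpen_Ioo k ht).symm

lemma tendsto_iteratedDeriv_right {a lam τ : ℝ} (hτ : 0 < τ) (n k : ℕ) :
    Tendsto (iteratedDeriv k (delayFlow a lam τ))
      (nhdsWithin (n * τ) (Set.Ioi (n * τ)))
      (nhds (iteratedDeriv k (modeSum a lam τ n) (n * τ))) := by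
  have hc := (contDiff_modeSum a lam τ n k).continuous_iteratedDeriv' k
  refine (hc.continuousAt.mono_left nhdsWithin_le_nhds).congr' ?_
  have hmem : Set.Ioo ((n : ℝ) * τ) ((n + 1) * τ) ∈ nhdsWithin ((n : ℝ) * τ) (Set.Ioi (n * τ)) :=
    Ioo_mem_nhdsGT (by linarith)
  filter_upwards [hmem] with t ht
  exact ((delayFlow_eqOn_Ioo hτ n).iteratedDeriv_of_isOpen isOpen_Ioo k ht).symm

lemma ContDiffAt.continuousAt_iteratedDeriv_nat {f : ℝ → ℝ} {k : ℕ} {x : ℝ}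
    (hf : ContDiffAt ℝ k f x) : ContinuousAt (iteratedDeriv k f) x := by
  rw [iteratedDeriv_eq_equiv_comp]
  exact (LinearIsometryEquiv.continuous _).continuousAt.comp
    (hf.continuousAt_iteratedFDeriv le_rfl)

/-- If `a ≠ 0`, then `Φ` is smooth on `(0,∞) \ {jτ : j ≥ 1}`, and at each lattice point
`jτ` (`j ≥ 1`): `Φ` is `C^{j-1}` on an open neighborhood of `jτ`; the one-sided limits of
the `j`-th derivative exist and jump by exactly `a^j` across `jτ`; and `Φ` is not `C^j` on
any neighborhood of `jτ`. -/
theorem stmt_10 (a lam τ : ℝ) (hτ : 0 < τ) (ha : a ≠ 0) :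
    ContDiffOn ℝ (⊤ : ℕ∞) (delayFlow a lam τ)
      (Set.Ioi (0:ℝ) \ {x : ℝ | ∃ j : ℕ, 1 ≤ j ∧ x = (j : ℝ) * τ}) ∧
    ∀ j : ℕ, 1 ≤ j →
      (∃ U : Set ℝ, IsOpen U ∧ (j : ℝ) * τ ∈ U ∧
          ContDiffOn ℝ ((j - 1 : ℕ) : ℕ∞) (delayFlow a lam τ) U) ∧
      (∃ L R : ℝ,
          Tendsto (iteratedDeriv j (delayFlow a lam τ))
            (nhdsWithin ((j : ℝ) * τ) (Set.Iio ((j : ℝ) * τ))) (nhds L) ∧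
          Tendsto (iteratedDeriv j (delayFlow a lam τ))
            (nhdsWithin ((j : ℝ) * τ) (Set.Ioi ((j : ℝ) * τ))) (nhds R) ∧
          R - L = a ^ j) ∧
      (∀ U ∈ nhds ((j : ℝ) * τ), ¬ ContDiffOn ℝ (j : ℕ∞) (delayFlow a lam τ) U) := by
  refine ⟨delayFlow_contDiffOn hτ, fun j hj => ?_⟩
  obtain ⟨m, rfl⟩ : ∃ m, j = m + 1 := ⟨j - 1, by omega⟩
  have hL := tendsto_iteratedDeriv_left (a := a) (lam := lam) hτ m (m + 1)
  have hR := tendsto_iteratedDeriv_right (a := a) (lam := lam) hτ (m + 1) (m + 1)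
  have hjump : iteratedDeriv (m + 1) (modeSum a lam τ (m + 1)) ((m + 1 : ℕ) * τ) -
      iteratedDeriv (m + 1) (modeSum a lam τ m) ((m + 1 : ℕ) * τ) = a ^ (m + 1) := by
    rw [modeSum_succ, iteratedDeriv_add (contDiff_modeSum a lam τ m _).contDiffAt
      (contDiff_modeTerm a lam τ (m + 1) _).contDiffAt, iteratedDeriv_modeTerm]
    ring
  refine ⟨⟨Set.Ioo (m * τ) ((m + 2) * τ), isOpen_Ioo, ?_, ?_⟩, ⟨_, _, hL, hR, hjump⟩, ?_⟩
  · constructor <;> push_cast <;> linarith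
  · exact delayFlow_contDiffOn_near hτ m
  · intro U hU hcd
    have hcont := (hcd.contDiffAt hU).continuousAt_iteratedDeriv_nat
    have e1 := tendsto_nhds_unique hL (hcont.mono_left nhdsWithin_le_nhds)
    have e2 := tendsto_nhds_unique hR (hcont.mono_left nhdsWithin_le_nhds)
    rw [e1, e2, sub_self] at hjump
    exact pow_ne_zero _ ha hjump.symm
end
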